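/- Let K be a commutative ring, S a noetherian commutative K-algebra that is projective as a K-module and such that S^ev = S ⊗_K S is noetherian, and let G be a finite group acting on S infinitesimally through outer K-linear automorphisms, with |G| invertible in K. Assume the invariant ring R = S^G is noetherian and S is a finitely generated R-module. Let c = depth(θ(S/R), S) be the depth of the Noether different of S over R. Then there are natural isomorphisms Hoch^i(R) ≅ (Hoch^i(S))^G for all i ≤ c − 2, where Hochschild cohomology is taken over K and G acts on Hoch^i(S) via its action on S. -/

import Mathlib

open CategoryTheory MulOpposite

attribute [local instance] HasDerivedCategory.standard
attribute [local instance] CategoryTheory.hasExt_of_hasDerivedCategory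

set_option maxHeartbeats 1000000
set_option synthInstance.maxHeartbeats 400000
set_option linter.unusedSectionVars false
set_option linter.unusedVariables false

noncomputable section
namespace MoritaHochschild

/-! ### Hochschild cochains over a commutative base ring `K` (bar-complex description) -/

section HochschildCochains

/-- Merging of consecutive entries: given `a : Fin (n+1) → R` and `i : Fin n`, the
`n`-tuple `(a 0, …, a (i-1), a i * a (i+1), a (i+2), …, a n)`. -/
def mulConsec {R : Type} [Mul R] {n : ℕ} (a : Fin (n + 1) → R) (i : Fin n) :
    Fin n → R :=
  fun j =>
    if j.1 < i.1 then a (Fin.castSucc j)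
    else if j.1 = i.1 then a (Fin.castSucc j) * a j.succ
    else a j.succ

/-- The Hochschild coboundary of an (inhomogeneous) `n`-cochain `f` on `R` with values in
an `R`-bimodule `V`:
`(d f)(a₀, …, aₙ) = a₀ • f(a₁, …, aₙ) + ∑ᵢ (-1)^(i+1) f(a₀, …, aᵢ·aᵢ₊₁, …, aₙ)
  + (-1)^(n+1) f(a₀, …, a_{n-1}) • aₙ`. -/
def hd {R V : Type} [Ring R] [AddCommGroup V] [SMul R V] [SMul Rᵐᵒᵖ V] {n : ℕ}
    (f : (Fin n → R) → V) : (Fin (n + 1) → R) → V :=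
  fun a =>
    a 0 • f (Fin.tail a)
    + (Finset.univ.sum fun i : Fin n => ((-1 : ℤ) ^ (i.1 + 1)) • f (mulConsec a i))
    + ((-1 : ℤ) ^ (n + 1)) • ((MulOpposite.op (a (Fin.last n))) • f (Fin.init a))

/-- `K`-multilinearity of a raw cochain (so that multilinear cochains correspond to
`R^{ev}`-linear maps on the bar resolution `R^{⊗ K (n+2)}`). -/
def IsMultilinearCochain (K : Type) [CommRing K] {R V : Type} [Ring R] [Module K R]
    [AddCommGroup V] [Module K V] {n : ℕ} (f : (Fin n → R) → V) : Prop :=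
  (∀ (a : Fin n → R) (i : Fin n) (x y : R),
      f (Function.update a i (x + y)) = f (Function.update a i x) + f (Function.update a i y))
  ∧ (∀ (a : Fin n → R) (i : Fin n) (k : K) (x : R),
      f (Function.update a i (k • x)) = k • f (Function.update a i x))

/-- A cochain is a coboundary if it is `d` of a multilinear cochain
(in degree `0`, only the zero cochain is a coboundary). -/
def IsCoboundary (K : Type) [CommRing K] {R V : Type} [Ring R] [Module K R]
    [AddCommGroup V] [Module K V] [SMul R V] [SMul Rᵐᵒᵖ V] :
    ∀ {n : ℕ}, ((Fin n → R) → V) → Prop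
  | 0, u => u = 0
  | _ + 1, u => ∃ h, IsMultilinearCochain K h ∧ u = hd h

/-- The cup product of Hochschild cochains (with coefficients in the ring itself). -/
def cup {R : Type} [Ring R] {m n : ℕ} (f : (Fin m → R) → R) (g : (Fin n → R) → R) :
    (Fin (m + n) → R) → R :=
  fun a => f (fun i => a (Fin.castAdd n i)) * g (fun j => a (Fin.natAdd m j))

end HochschildCochains
section HochschildLaws

variable {K : Type} [CommRing K] {R : Type} [Ring R] [Module K R] {n : ℕ}

lemma hd_add (f g : (Fin n → R) → R) : hd (f + g) = hd f + hd g := by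
  funext a
  show hd (f + g) a = hd f a + hd g a
  simp only [hd, Pi.add_apply, smul_add, Finset.sum_add_distrib]
  abel

lemma hd_neg (f : (Fin n → R) → R) : hd (-f) = -hd f := by
  funext a
  show hd (-f) a = -hd f a
  simp only [hd, Pi.neg_apply, smul_neg, Finset.sum_neg_distrib, neg_add]

lemma hd_zero : hd (0 : (Fin n → R) → R) = 0 := by
  funext a
  show hd (0 : (Fin n → R) → R) a = 0
  simp [hd]

lemma IsMultilinearCochain.add {f g : (Fin n → R) → R}
    (hf : IsMultilinearCochain K f) (hg : IsMultilinearCochain K g) :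
    IsMultilinearCochain K (f + g) := by
  constructor
  · intro a i x y
    show f _ + g _ = (f _ + g _) + (f _ + g _)
    rw [hf.1 a i x y, hg.1 a i x y]
    abel
  · intro a i k x
    show f _ + g _ = k • (f _ + g _)
    rw [hf.2 a i k x, hg.2 a i k x, smul_add]

lemma IsMultilinearCochain.neg {f : (Fin n → R) → R}
    (hf : IsMultilinearCochain K f) : IsMultilinearCochain K (-f) := by
  constructor
  · intro a i x y
    show -f _ = -f _ + -f _
    rw [hf.1 a i x y]
    abel
  · intro a i k x
    show -f _ = k • (-f _)
    rw [hf.2 a i k x, smul_neg]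

lemma IsMultilinearCochain.zero : IsMultilinearCochain K (0 : (Fin n → R) → R) := by
  constructor
  · intro a i x y
    show (0 : R) = 0 + 0
    rw [add_zero]
  · intro a i k x
    show (0 : R) = k • (0 : R)
    rw [smul_zero]

/-- The multilinear cocycles: the `n`-th term of the complex computing Hochschild
cohomology `Hoch^•(R)` (cochain description of `Hom_{R^{ev}}(𝔹 R, R)`). -/
def cocycles (K R : Type) [CommRing K] [Ring R] [Module K R] (n : ℕ) :
    AddSubgroup ((Fin n → R) → R) where
  carrier := {f | IsMultilinearCochain K f ∧ hd f = 0}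
  add_mem' := fun hf hg => ⟨hf.1.add hg.1, by rw [hd_add, hf.2, hg.2, add_zero]⟩
  zero_mem' := ⟨IsMultilinearCochain.zero, hd_zero⟩
  neg_mem' := fun hf => ⟨hf.1.neg, by rw [hd_neg, hf.2, neg_zero]⟩

/-- The coboundaries, as a subgroup of the cocycles. -/
def coboundariesIn (K R : Type) [CommRing K] [Ring R] [Module K R] (n : ℕ) :
    AddSubgroup (cocycles K R n) where
  carrier := {f | IsCoboundary K (f : (Fin n → R) → R)}
  add_mem' := by
    intro u v hu hv
    match n, u, v, hu, hv with
    | 0, u, v, hu, hv =>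
      show ((u + v : cocycles K R 0) : (Fin 0 → R) → R) = 0
      have : ((u + v : cocycles K R 0) : (Fin 0 → R) → R) = (u : _) + (v : _) := rfl
      rw [this, show ((u : (Fin 0 → R) → R)) = 0 from hu, show ((v : (Fin 0 → R) → R)) = 0 from hv,
        add_zero]
    | (m + 1), u, v, hu, hv =>
      obtain ⟨h, hm, he⟩ := hu
      obtain ⟨h', hm', he'⟩ := hv
      exact ⟨h + h', hm.add hm', by
        show ((u : _) + (v : _) : (Fin (m+1) → R) → R) = _
        rw [he, he', hd_add]⟩
  zero_mem' := by
    match n with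
    | 0 => rfl
    | m + 1 => exact ⟨0, IsMultilinearCochain.zero, by rw [hd_zero]; rfl⟩
  neg_mem' := by
    intro u hu
    match n, u, hu with
    | 0, u, hu =>
      show ((-u : cocycles K R 0) : (Fin 0 → R) → R) = 0
      have : ((-u : cocycles K R 0) : (Fin 0 → R) → R) = -(u : _) := rfl
      rw [this, show ((u : (Fin 0 → R) → R)) = 0 from hu, neg_zero]
    | (m + 1), u, hu =>
      obtain ⟨h, hm, he⟩ := hu
      exact ⟨-h, hm.neg, by
        show (-(u : (Fin (m+1) → R) → R)) = _
        rw [he, hd_neg]⟩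

/-- The `n`-th Hochschild cohomology group of the `K`-algebra `R` (with coefficients
in `R`), computed by multilinear (bar) cochains. -/
def HH (K R : Type) [CommRing K] [Ring R] [Module K R] (n : ℕ) : Type :=
  cocycles K R n ⧸ coboundariesIn K R n

instance (K R : Type) [CommRing K] [Ring R] [Module K R] (n : ℕ) :
    AddCommGroup (HH K R n) :=
  inferInstanceAs (AddCommGroup (cocycles K R n ⧸ coboundariesIn K R n))

end HochschildLaws


section Invariants

variable (K : Type) [CommRing K] (S : Type) [CommRing S] [Algebra K S]
variable (G : Type) [Group G] [MulSemiringAction G S] [SMulCommClass G K S]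

/-- The invariant ring `R = S^G`, as a subalgebra of `S`. -/
def invariants : Subalgebra K S where
  carrier := {s | ∀ g : G, g • s = s}
  mul_mem' := fun hx hy g => by rw [smul_mul', hx g, hy g]
  add_mem' := fun hx hy g => by rw [smul_add, hx g, hy g]
  algebraMap_mem' := fun k g => by
    rw [Algebra.algebraMap_eq_smul_one, smul_comm, smul_one]

/-- The action of `G` on Hochschild cochains of `S` over `K`. -/
def mapG (g : G) {n : ℕ} (f : (Fin n → S) → S) : (Fin n → S) → S :=
  fun a => g • f (fun i => g⁻¹ • a i)

/-- The Noether (homological) different `θ(S/R)` of `S` over its invariant ring `R`: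
the image under the multiplication map `μ : S ⊗_R S → S` of the `S`-centralizer
`(S ⊗_R S)^S = {x | ∀ s, (s ⊗ 1)·x = (1 ⊗ s)·x}`; an ideal of `S`. -/
def noetherDifferent : Ideal S :=
  Ideal.span ((Algebra.TensorProduct.lmul' (R := ↥(invariants K S G)) (S := S)) ''
    {x : TensorProduct (↥(invariants K S G)) S S | ∀ s : S,
      (Algebra.TensorProduct.includeLeftRingHom (R := ↥(invariants K S G)) (A := S) (B := S)) s
          * x =
        (Algebra.TensorProduct.includeRight (R := ↥(invariants K S G)) (A := S) (B := S)) s * x})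

/-- The depth `depth(θ(S/R), S)` of the Noether different on `S`, measured through the
vanishing of `Ext^i_S(S/θ(S/R), S)`. -/
def noetherDepth : ℕ∞ :=
  sInf {i : ℕ∞ | ∃ n : ℕ, i = n ∧
    ¬ Subsingleton (Abelian.Ext
        (ModuleCat.of S (S ⧸ noetherDifferent K S G))
        (ModuleCat.of S S) n)}

end Invariants

/-- The fixed points of a family of additive endomorphisms, as a subgroup. -/
def fixedSubgroup {G H : Type} [AddCommGroup H] (ρ : G → (H →+ H)) : AddSubgroup H where
  carrier := {x | ∀ g, ρ g x = x}
  add_mem' := fun hx hy g => by rw [map_add, hx g, hy g]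
  zero_mem' := fun g => map_zero _
  neg_mem' := fun hx g => by rw [map_neg, hx g]

section BimoduleActions

variable {K S : Type} [CommRing K] [CommRing S] [Algebra K S]
variable {N : Type} [AddCommGroup N] [Module K N]

/-- Commuting (not necessarily unital) left and right actions of `S` on a `K`-module `N`. -/
structure Act (K S N : Type) [CommRing K] [CommRing S] [Algebra K S] [AddCommGroup N]
    [Module K N] where
  l : S →ₗ[K] N →ₗ[K] N
  r : S →ₗ[K] N →ₗ[K] N
  l_mul : ∀ s t n, l (s * t) n = l s (l t n)
  r_mul : ∀ s t n, r (s * t) n = r s (r t n)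
  comm : ∀ s t n, l s (r t n) = r t (l s n)

/-- The map `N → Hom_K(S, N)` sending `n` to `a ↦ a n`. -/
def Act.iota (A : Act K S N) : N →ₗ[K] (S →ₗ[K] N) := A.l.flip

@[simp] lemma Act.iota_apply (A : Act K S N) (n : N) (a : S) : A.iota n a = A.l a n := rfl

/-- The coinduced bimodule `Hom_K(S, N)`. -/
def Act.plus (A : Act K S N) : Act K S (S →ₗ[K] N) where
  l := LinearMap.mk₂ K (fun s φ => φ ∘ₗ LinearMap.mulRight K s)
    (by intros; ext; simp [mul_add]) (by intros; ext; simp)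
    (by intros; ext; simp) (by intros; ext; simp)
  r := LinearMap.mk₂ K (fun t φ => A.r t ∘ₗ φ)
    (by intros; ext; simp) (by intros; ext; simp)
    (by intros; ext; simp) (by intros; ext; simp)
  l_mul := by intro s t n; ext a; simp [mul_assoc]
  r_mul := by intro s t n; ext a; simp [A.r_mul]
  comm := by intro s t n; ext a; simp

@[simp] lemma Act.plus_l (A : Act K S N) (s : S) (φ : S →ₗ[K] N) (a : S) :
    A.plus.l s φ a = φ (a * s) := rfl

@[simp] lemma Act.plus_r (A : Act K S N) (s : S) (φ : S →ₗ[K] N) (a : S) :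
    A.plus.r s φ a = A.r s (φ a) := rfl

/-- The projection `φ ↦ φ - ι (φ 1)`. -/
def Act.pr (A : Act K S N) : (S →ₗ[K] N) →ₗ[K] (S →ₗ[K] N) :=
  LinearMap.id - A.iota ∘ₗ (LinearMap.applyₗ (1 : S))

@[simp] lemma Act.pr_apply (A : Act K S N) (φ : S →ₗ[K] N) (a : S) :
    A.pr φ a = φ a - A.l a (φ 1) := rfl

/-- The shifted bimodule: `Hom_K(S, N)` with left action `(s φ)(a) = φ (a s) - a φ(s)`. -/
def Act.sh (A : Act K S N) : Act K S (S →ₗ[K] N) where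
  l := LinearMap.mk₂ K (fun s φ => φ ∘ₗ LinearMap.mulRight K s - A.iota (φ s))
    (by intros; ext; simp [mul_add]; abel) (by intros; ext; simp [smul_sub])
    (by intros; ext; simp; abel) (by intros; ext; simp [smul_sub])
  r := A.plus.r
  l_mul := by
    intro s t n; ext a
    simp only [LinearMap.mk₂_apply, LinearMap.sub_apply, LinearMap.comp_apply,
      LinearMap.mulRight_apply, Act.iota_apply, map_sub, A.l_mul, mul_assoc]
    abel
  r_mul := A.plus.r_mul
  comm := by
    intro s t n; ext a
    simp only [LinearMap.mk₂_apply, LinearMap.sub_apply, LinearMap.comp_apply,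
      LinearMap.mulRight_apply, Act.iota_apply, map_sub, Act.plus_r, A.comm]

@[simp] lemma Act.sh_l (A : Act K S N) (s : S) (φ : S →ₗ[K] N) (a : S) :
    A.sh.l s φ a = φ (a * s) - A.l a (φ s) := rfl

@[simp] lemma Act.sh_r (A : Act K S N) (s : S) (φ : S →ₗ[K] N) (a : S) :
    A.sh.r s φ a = A.r s (φ a) := rfl

/-- The Hochschild differential with coefficients in `N`. -/
def dd (A : Act K S N) {n : ℕ} (f : (Fin n → S) → N) : (Fin (n + 1) → S) → N :=
  fun a =>
    A.l (a 0) (f (Fin.tail a))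
    + (Finset.univ.sum fun i : Fin n => ((-1 : ℤ) ^ (i.1 + 1)) • f (mulConsec a i))
    + ((-1 : ℤ) ^ (n + 1)) • (A.r (a (Fin.last n)) (f (Fin.init a)))

lemma dd_map {N' : Type} [AddCommGroup N'] [Module K N'] (A : Act K S N) (A' : Act K S N')
    (p : N →ₗ[K] N') (hl : ∀ s n, p (A.l s n) = A'.l s (p n))
    (hr : ∀ s n, p (A.r s n) = A'.r s (p n)) {n : ℕ} (f : (Fin n → S) → N)
    (a : Fin (n + 1) → S) :
    p (dd A f a) = dd A' (fun b => p (f b)) a := by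
  simp only [dd, map_add, map_sum, map_zsmul, hl, hr]

lemma dd_add (A : Act K S N) {n : ℕ} (f g : (Fin n → S) → N) :
    dd A (f + g) = dd A f + dd A g := by
  funext a
  simp only [dd, Pi.add_apply, map_add, smul_add, Finset.sum_add_distrib]
  abel

lemma dd_sub (A : Act K S N) {n : ℕ} (f g : (Fin n → S) → N) :
    dd A (f - g) = dd A f - dd A g := by
  funext a
  simp only [dd, Pi.sub_apply, map_sub, smul_sub, Finset.sum_sub_distrib]
  abel

lemma dd_zero (A : Act K S N) {n : ℕ} : dd A (0 : (Fin n → S) → N) = 0 := by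
  funext a
  simp [dd]

lemma mulConsec_cons_zero {n : ℕ} (t : S) (a : Fin (n + 1) → S) :
    mulConsec (Fin.cons t a : Fin (n + 2) → S) 0 = Fin.cons (t * a 0) (Fin.tail a) := by
  funext j
  refine Fin.cases ?_ (fun j => ?_) j
  · simp [mulConsec]
  · simp [mulConsec, Fin.tail]

lemma mulConsec_cons_succ {n : ℕ} (t : S) (a : Fin (n + 1) → S) (i : Fin n) :
    mulConsec (Fin.cons t a : Fin (n + 2) → S) i.succ = Fin.cons t (mulConsec a i) := by
  funext j
  refine Fin.cases ?_ (fun j => ?_) j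
  · simp [mulConsec]
  · simp [mulConsec]

lemma init_cons' {n : ℕ} (t : S) (a : Fin (n + 1) → S) :
    Fin.init (Fin.cons t a : Fin (n + 2) → S) = Fin.cons t (Fin.init a) := by
  funext j
  refine Fin.cases ?_ (fun j => ?_) j
  · simp [Fin.init]
  · simp [Fin.init]

lemma dd_cons (A : Act K S N) {n : ℕ} (f : (Fin (n + 1) → S) → N)
    (g : (Fin n → S) → (S →ₗ[K] N)) (hg : ∀ b t, g b t = f (Fin.cons t b))
    (t : S) (a : Fin (n + 1) → S) :
    dd A f (Fin.cons t a) = A.l t (f a) - dd A.plus g a t := by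
  have h0 : (Fin.cons t a : Fin (n + 2) → S) 0 = t := rfl
  simp only [dd, Fin.sum_univ_succ, mulConsec_cons_zero, mulConsec_cons_succ, init_cons',
    Fin.tail_cons, Fin.cons_last, LinearMap.add_apply, LinearMap.neg_apply, LinearMap.sum_apply, LinearMap.smul_apply,
    Act.plus_l, Act.plus_r, hg, h0, Fin.val_zero, Fin.val_succ, pow_succ (-1 : ℤ), pow_zero,
    mul_neg, mul_one, neg_smul, Finset.sum_neg_distrib, one_smul, neg_neg]
  abel

lemma dd_cons_sh (A : Act K S N) {n : ℕ} (f : (Fin (n + 1) → S) → N)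
    (g : (Fin n → S) → (S →ₗ[K] N)) (hg : ∀ b t, g b t = f (Fin.cons t b))
    (t : S) (a : Fin (n + 1) → S) :
    dd A f (Fin.cons t a) = - dd A.sh g a t := by
  rw [dd_cons A f g hg]
  have : dd A.sh g a t = dd A.plus g a t - A.l t (f a) := by
    have h : f a = g (Fin.tail a) (a 0) := by rw [hg]; congr 1; exact (Fin.cons_self_tail a).symm
    simp only [dd, LinearMap.add_apply, Act.sh_l, Act.plus_l, h]
    simp only [LinearMap.smul_apply, Act.sh_r, Act.plus_r]
    abel
  rw [this]; abel

/-- Bundled-existence version of multilinearity. -/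
def IsML (K : Type) {S N : Type} [CommRing K] [CommRing S] [Algebra K S] [AddCommGroup N]
    [Module K N] {n : ℕ} (f : (Fin n → S) → N) : Prop :=
  ∃ F : MultilinearMap K (fun _ : Fin n => S) N, ∀ a, F a = f a

lemma isML_iff {n : ℕ} (f : (Fin n → S) → N) : IsMultilinearCochain K f ↔ IsML K f := by
  constructor
  · intro h
    exact ⟨MultilinearMap.mk' f h.1 h.2, fun a => rfl⟩
  · rintro ⟨F, hF⟩
    obtain rfl : (F : (Fin n → S) → N) = f := funext hF
    exact ⟨fun a i x y => F.map_update_add a i x y, fun a i k x => F.map_update_smul a i k x⟩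

lemma IsML.add {n : ℕ} {f g : (Fin n → S) → N} (hf : IsML K f) (hg : IsML K g) :
    IsML K (f + g) := by
  obtain ⟨F, hF⟩ := hf
  obtain ⟨G, hG⟩ := hg
  exact ⟨F + G, fun a => by simp [hF, hG]⟩

lemma IsML.sub {n : ℕ} {f g : (Fin n → S) → N} (hf : IsML K f) (hg : IsML K g) :
    IsML K (f - g) := by
  obtain ⟨F, hF⟩ := hf
  obtain ⟨G, hG⟩ := hg
  exact ⟨F - G, fun a => by simp [hF, hG]⟩

lemma IsML.map {N' : Type} [AddCommGroup N'] [Module K N'] (p : N →ₗ[K] N') {n : ℕ}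
    {f : (Fin n → S) → N} (hf : IsML K f) : IsML K (fun a => p (f a)) := by
  obtain ⟨F, hF⟩ := hf
  exact ⟨p.compMultilinearMap F, fun a => by simp [hF]⟩

lemma IsML.precomp (q : S →ₗ[K] S) {n : ℕ}
    {f : (Fin n → S) → N} (hf : IsML K f) : IsML K (fun a => f (fun i => q (a i))) := by
  obtain ⟨F, hF⟩ := hf
  exact ⟨F.compLinearMap (fun _ => q), fun a => by simp [← hF]⟩

/-- Currying the first variable. -/
lemma IsML.curry {n : ℕ} {f : (Fin (n + 1) → S) → N} (hf : IsML K f) :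
    ∃ g : (Fin n → S) → (S →ₗ[K] N), IsML K g ∧ ∀ b t, g b t = f (Fin.cons t b) := by
  obtain ⟨F, hF⟩ := hf
  refine ⟨_, ⟨MultilinearMap.mk' (fun b => { toFun := fun t => F (Fin.cons t b : Fin (n + 1) → S)
                                             map_add' := fun x y => F.cons_add b x y
                                             map_smul' := fun c x => F.cons_smul b c x }) ?_ ?_,
    fun a => rfl⟩, fun b t => hF _⟩
  · intro m i x y
    ext t
    simp [Fin.cons_update]
  · intro m i x y
    ext t
    simp [Fin.cons_update]

/-- Uncurrying the first variable. -/
lemma IsML.uncurry {n : ℕ} {g : (Fin n → S) → (S →ₗ[K] N)} (hg : IsML K g) :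
    IsML K (fun a : Fin (n + 1) → S => g (Fin.tail a) (a 0)) := by
  obtain ⟨G, hG⟩ := hg
  let φ : S →ₗ[K] MultilinearMap K (fun _ : Fin n => S) N :=
    { toFun := fun t => (LinearMap.applyₗ t).compMultilinearMap G
      map_add' := by intro x y; ext; simp
      map_smul' := by intro x y; ext; simp }
  exact ⟨LinearMap.uncurryLeft (M := fun _ => S) φ, fun a => by simp [φ, hG]⟩

lemma IsML.dd (A : Act K S N) {n : ℕ} {f : (Fin n → S) → N} (hf : IsML K f) :
    IsML K (dd A f) := by
  induction n generalizing N with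
  | zero =>
    refine ⟨MultilinearMap.ofSubsingleton K S N (0 : Fin 1)
      (A.l.flip (f ![]) - A.r.flip (f ![])), fun a => ?_⟩
    simp only [MoritaHochschild.dd, MultilinearMap.ofSubsingleton_apply_apply]
    rw [Subsingleton.elim (Fin.tail a) ![], Subsingleton.elim (Fin.init a) ![]]
    simp [sub_eq_add_neg]
  | succ n ih =>
    obtain ⟨g, hg, hgf⟩ := hf.curry
    have := ((ih A.sh hg).map (-LinearMap.id)).uncurry
    obtain ⟨F, hF⟩ := this
    refine ⟨F, fun a => ?_⟩
    rw [hF, ← Fin.cons_self_tail a, dd_cons_sh A f g hgf]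
    simp

lemma dd_dd (A : Act K S N) {n : ℕ} {f : (Fin n → S) → N} (hf : IsML K f) :
    MoritaHochschild.dd A (MoritaHochschild.dd A f) = 0 := by
  induction n generalizing N with
  | zero =>
    funext a
    have e : ∀ b : Fin 1 → S, MoritaHochschild.dd A f b = A.l (b 0) (f ![]) - A.r (b 0) (f ![]) := by
      intro b
      simp only [MoritaHochschild.dd]
      rw [Subsingleton.elim (Fin.tail b) ![], Subsingleton.elim (Fin.init b) ![]]
      simp [sub_eq_add_neg]
    rw [MoritaHochschild.dd]
    simp only [e]
    simp [mulConsec, Fin.tail, Fin.init, A.l_mul, A.comm]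
    rw [mul_comm, A.r_mul]
    abel
  | succ n ih =>
    obtain ⟨g, hg, hgf⟩ := hf.curry
    funext a
    rw [← Fin.cons_self_tail a, dd_cons_sh A _ (-(MoritaHochschild.dd A.sh g))]
    · have h := ih A.sh hg
      have h2 : MoritaHochschild.dd A.sh (-(MoritaHochschild.dd A.sh g)) = 0 := by
        rw [← zero_sub, dd_sub, h, dd_zero, sub_zero]
      rw [h2]; simp
    · intro b t
      rw [dd_cons_sh A f g hgf]; rfl

end BimoduleActions

section Killing

open TensorProduct

variable {K S : Type} [CommRing K] [CommRing S] [Algebra K S]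
variable {N : Type} [AddCommGroup N] [Module K N]

lemma dd_map_at {N' : Type} [AddCommGroup N'] [Module K N'] (A : Act K S N) (A' : Act K S N')
    (p : N →ₗ[K] N') {n : ℕ} (f : (Fin n → S) → N)
    (a : Fin (n + 1) → S) (hl : ∀ n, p (A.l (a 0) n) = A'.l (a 0) (p n))
    (hr : ∀ s n, p (A.r s n) = A'.r s (p n)) :
    p (dd A f a) = dd A' (fun b => p (f b)) a := by
  simp only [dd, map_add, map_sum, map_zsmul, hl, hr]

/-- Cochains vanishing on tuples from the subalgebra `R`. -/
def Rel (R : Subalgebra K S) {n : ℕ} (f : (Fin n → S) → N) : Prop :=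
  ∀ a, (∀ i, a i ∈ R) → f a = 0

lemma mulConsec_mem (R : Subalgebra K S) {n : ℕ} (a : Fin (n + 1) → S) (ha : ∀ i, a i ∈ R)
    (i j : Fin n) : mulConsec a i j ∈ R := by
  unfold mulConsec
  split_ifs
  · exact ha _
  · exact R.mul_mem (ha _) (ha _)
  · exact ha _

lemma dd_congr_on (R : Subalgebra K S) (A : Act K S N) {n : ℕ} {f g : (Fin n → S) → N}
    (h : ∀ a, (∀ i, a i ∈ R) → f a = g a) (a : Fin (n + 1) → S) (ha : ∀ i, a i ∈ R) :
    dd A f a = dd A g a := by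
  unfold dd
  rw [h (Fin.tail a) (fun i => ha _), h (Fin.init a) (fun i => ha _)]
  congr 2
  exact Finset.sum_congr rfl fun i _ => by rw [h _ (mulConsec_mem R a ha i)]

lemma Rel.dd {R : Subalgebra K S} (A : Act K S N) {n : ℕ} {f : (Fin n → S) → N}
    (h : Rel R f) : Rel R (dd A f) := by
  intro a ha
  rw [dd_congr_on R A (g := 0) h a ha, dd_zero]; rfl

lemma Rel.sub {R : Subalgebra K S} {n : ℕ} {f g : (Fin n → S) → N}
    (hf : Rel R f) (hg : Rel R g) : Rel R (f - g) := by
  intro a ha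
  simp [hf a ha, hg a ha]

lemma Rel.map {R : Subalgebra K S} {N' : Type} [AddCommGroup N'] [Module K N'] (p : N →ₗ[K] N')
    {n : ℕ} {f : (Fin n → S) → N} (hf : Rel R f) : Rel R (fun a => p (f a)) := by
  intro a ha
  simp [hf a ha]

/-- Approximate Galois coordinates for `S` over `R`. -/
structure Coord (R : Subalgebra K S) where
  m : ℕ
  a : Fin m → S
  b : Fin m → S
  t : Fin m → S →ₗ[K] S
  y : S
  t_mem : ∀ i s, t i s ∈ R
  t_mul : ∀ i s r, r ∈ R → t i (s * r) = t i s * r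
  sum_t : ∀ s, ∑ i, a i * t i s = s * y
  bal : ∀ s, ∑ i, a i ⊗ₜ[R] (s * b i) = ∑ i, (s * a i) ⊗ₜ[R] b i
  y_eq : ∑ i, a i * b i = y

/-- The operators that will kill relative cohomology. -/
def Act.U {R : Subalgebra K S} (A : Act K S N) (C : Coord R) : ℕ → (N →ₗ[K] N)
  | 0 => ∑ i, A.l (C.a i) ∘ₗ A.r (C.b i)
  | m + 1 => A.l C.y ∘ₗ A.U C m ∘ₗ A.l C.y

lemma Act.U_map {R : Subalgebra K S} (C : Coord R) {N' : Type} [AddCommGroup N'] [Module K N']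
    (A : Act K S N) (A' : Act K S N')
    (p : N →ₗ[K] N') (hl : ∀ s n, p (A.l s n) = A'.l s (p n))
    (hr : ∀ s n, p (A.r s n) = A'.r s (p n)) (m : ℕ) (n : N) :
    p (A.U C m n) = A'.U C m (p n) := by
  induction m generalizing n with
  | zero => simp [Act.U, hl, hr]
  | succ m ih => simp [Act.U, hl, ih]

lemma Act.l_comm (A : Act K S N) (s t : S) (n : N) : A.l s (A.l t n) = A.l t (A.l s n) := by
  rw [← A.l_mul, mul_comm, A.l_mul]

lemma Act.r_comm (A : Act K S N) (s t : S) (n : N) : A.r s (A.r t n) = A.r t (A.r s n) := by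
  rw [← A.r_mul, mul_comm, A.r_mul]

lemma Act.U_l {R : Subalgebra K S} (C : Coord R) (A : Act K S N) (m : ℕ) (s : S) (n : N) :
    A.U C m (A.l s n) = A.l s (A.U C m n) :=
  (A.U_map C A (A.l s) (fun t n => A.l_comm s t n) (fun t n => A.comm s t n) m n).symm

lemma Act.U_r {R : Subalgebra K S} (C : Coord R) (A : Act K S N) (m : ℕ) (s : S) (n : N) :
    A.U C m (A.r s n) = A.r s (A.U C m n) :=
  (A.U_map C A (A.r s) (fun t n => (A.comm t s n).symm) (fun t n => A.r_comm s t n) m n).symm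

lemma Act.iota_l (A : Act K S N) (s : S) (n : N) : A.iota (A.l s n) = A.plus.l s (A.iota n) := by
  ext a; simp [A.l_mul]

lemma Act.iota_r (A : Act K S N) (s : S) (n : N) : A.iota (A.r s n) = A.plus.r s (A.iota n) := by
  ext a; simp [A.comm]

lemma Act.pr_l (A : Act K S N) (s : S) (φ : S →ₗ[K] N) :
    A.pr (A.plus.l s φ) = A.sh.l s (A.pr φ) := by
  ext a; simp [A.l_mul]

lemma Act.pr_r (A : Act K S N) (s : S) (φ : S →ₗ[K] N) :
    A.pr (A.plus.r s φ) = A.sh.r s (A.pr φ) := by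
  ext a; simp [A.comm]

lemma Act.pr_iota (A : Act K S N) (n : N) : A.pr (A.iota n) = 0 := by
  ext a; simp [← A.l_mul]

lemma Act.pr_pr (A : Act K S N) (φ : S →ₗ[K] N) : A.pr (A.pr φ) = A.pr φ := by
  ext a; simp [← A.l_mul]

lemma Act.pr_sh_l (A : Act K S N) (s : S) (φ : S →ₗ[K] N) :
    A.pr (A.sh.l s φ) = A.sh.l s (A.pr φ) := by
  ext a; simp [← A.l_mul]

lemma Act.pr_sh_r (A : Act K S N) (s : S) (φ : S →ₗ[K] N) :
    A.pr (A.sh.r s φ) = A.sh.r s (A.pr φ) := by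
  ext a; simp [A.comm]

lemma kill_zero {R : Subalgebra K S} (C : Coord R) (A : Act K S N) (f : (Fin 1 → S) → N)
    (hf : IsML K f) (hrel : Rel R f) (hcoc : dd A f = 0) (a : Fin 1 → S) :
    A.U C 0 (f a) = 0 := by
  obtain ⟨g, hg, hgf⟩ := hf.curry
  set F := g ![] with hF
  have e : ∀ b : Fin 1 → S, f b = F (b 0) := by
    intro b
    rw [hF, hgf]
    congr 1
    funext i
    rw [Subsingleton.elim i 0]; rfl
  have hR : ∀ r ∈ R, F r = 0 := by
    intro r hr
    have := hrel (fun _ => r) (fun _ => hr)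
    rwa [e] at this
  have hder : ∀ s t, F (s * t) = A.l s (F t) + A.r t (F s) := by
    intro s t
    have := congrFun hcoc ![s, t]
    simp [dd, e, mulConsec, Fin.tail, Fin.init] at this
    rw [← sub_eq_zero, ← neg_eq_zero, ← this]
    abel
  rw [e]
  generalize a 0 = s
  let c : S →+ S →+ N :=
    AddMonoidHom.mk' (fun p => (A.l p ∘ₗ F).toAddMonoidHom) (by intro x z; ext; simp)
  have hc : ∀ p q, c p q = A.l p (F q) := fun p q => rfl
  have hb : ∀ (r : R) (p q : S), c (r • p) q = c p (r • q) := by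
    intro r p q
    rw [hc, hc, Subalgebra.smul_def, Subalgebra.smul_def, smul_eq_mul, smul_eq_mul, hder,
      hR r r.2, map_zero, add_zero, mul_comm, A.l_mul]
  have key := congrArg (TensorProduct.liftAddHom c hb) (C.bal s)
  simp only [map_sum, TensorProduct.liftAddHom_tmul, hc, hder, map_add, Finset.sum_add_distrib] at key
  simp only [A.l_mul, A.l_comm s] at key
  simpa [Act.U] using key

theorem kill {R : Subalgebra K S} (C : Coord R) (π : S →ₗ[K] S) (hπ : ∀ s, π s ∈ R)
    (hπ' : ∀ s ∈ R, π s = s) (m : ℕ) (N : Type) [AddCommGroup N] [Module K N]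
    (A : Act K S N) (f : (Fin (m + 1) → S) → N)
    (hf : IsML K f) (hrel : Rel R f) (hcoc : dd A f = 0) :
    ∃ g : (Fin m → S) → N, IsML K g ∧ Rel R g ∧ ∀ a, dd A g a = A.U C m (f a) := by
  induction m generalizing N with
  | zero =>
    refine ⟨0, ⟨0, fun a => rfl⟩, fun a _ => rfl, fun a => ?_⟩
    rw [dd_zero, kill_zero C A f hf hrel hcoc]; rfl
  | succ m ih =>
    obtain ⟨G0, hG0, hG0f⟩ := hf.curry
    have hdG0 : ∀ b, dd A.plus G0 b = A.iota (f b) := by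
      intro b
      ext t
      have := dd_cons A f G0 hG0f t b
      rw [hcoc] at this
      simpa using (sub_eq_zero.mp this.symm).symm
    obtain ⟨H, hH, hHG⟩ := hG0.curry
    let q : (S →ₗ[K] (S →ₗ[K] N)) →ₗ[K] (S →ₗ[K] N) :=
      { toFun := fun ψ => ∑ i, (LinearMap.applyₗ (C.a i)) ∘ₗ ψ ∘ₗ C.t i
        map_add' := by intro x z; ext; simp [Finset.sum_add_distrib]
        map_smul' := by intro x z; ext; simp [Finset.smul_sum] }
    have hq : ∀ ψ a, q ψ a = ∑ i, ψ (C.t i a) (C.a i) := by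
      intro ψ a; simp [q]
    let k : (Fin m → S) → (S →ₗ[K] N) := fun b => q (H (fun i => π (b i)))
    have hk : IsML K k := (hH.precomp π).map q
    have hkR : ∀ b : Fin (m + 1) → S, (∀ i, b i ∈ R) → dd A.plus k b = A.plus.l C.y (G0 b) := by
      intro b hb
      have h1 : dd A.plus k b = dd A.plus (fun c => q (H c)) b := by
        refine dd_congr_on R _ (fun c hc => ?_) b hb
        simp only [k]
        congr 2
        funext i
        exact hπ' _ (hc i)
      rw [h1, ← dd_map_at A.plus.plus A.plus q H b]
      · ext a
        rw [hq, Act.plus_l, ← C.sum_t, map_sum]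
        refine Finset.sum_congr rfl fun i _ => ?_
        have h2 := dd_cons A.plus G0 H hHG (C.t i a) b
        rw [hdG0, hrel _ (fun j => by
          refine Fin.cases ?_ (fun j => ?_) j
          · exact C.t_mem i a
          · exact hb j)] at h2
        have h3 := congrArg (fun φ : S →ₗ[K] N => φ (C.a i)) h2
        simp at h3
        exact (sub_eq_zero.mp h3.symm).symm
      · intro ψ
        ext a
        simp [hq, C.t_mul _ _ _ (hb 0)]
      · intro s ψ
        ext a
        simp [hq]
    let G : (Fin (m + 1) → S) → (S →ₗ[K] N) := (fun b => A.plus.l C.y (G0 b)) - dd A.plus k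
    have hG : IsML K G := (hG0.map (A.plus.l C.y)).sub (hk.dd A.plus)
    have hGrel : Rel R G := by
      intro b hb
      simp only [G, Pi.sub_apply, hkR b hb, sub_self]
    have hdG : ∀ b, dd A.plus G b = A.iota (A.l C.y (f b)) := by
      intro b
      simp only [G]
      rw [dd_sub, dd_dd A.plus hk, sub_zero, ← dd_map A.plus A.plus (A.plus.l C.y)
        (fun s n => A.plus.l_comm _ _ _) (fun s n => A.plus.comm _ _ _), hdG0, Act.iota_l]
    obtain ⟨h, hh, hhrel, hdh⟩ := ih (S →ₗ[K] N) A.sh (fun b => A.pr (G b)) (hG.map A.pr)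
      (hGrel.map A.pr) (by
        funext b
        rw [← dd_map A.plus A.sh A.pr A.pr_l A.pr_r, hdG, A.pr_iota]; rfl)
    let G' : (Fin (m + 1) → S) → (S →ₗ[K] N) := (fun b => A.plus.U C m (G b)) - dd A.plus h
    have hG' : IsML K G' := (hG.map _).sub (hh.dd A.plus)
    have hG'rel : Rel R G' := (hGrel.map _).sub (hhrel.dd A.plus)
    have hprG' : ∀ b, A.pr (G' b) = 0 := by
      intro b
      have h1 : A.pr (G' b) = dd A.sh h b - dd A.sh (fun c => A.pr (h c)) b := by
        simp only [G', Pi.sub_apply, map_sub]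
        rw [hdh, dd_map A.plus A.sh A.pr A.pr_l A.pr_r,
          Act.U_map C A.plus A.sh A.pr A.pr_l A.pr_r]
      rw [← A.pr_pr, h1, map_sub, dd_map A.sh A.sh A.pr A.pr_sh_l A.pr_sh_r,
        dd_map A.sh A.sh A.pr A.pr_sh_l A.pr_sh_r]
      simp only [A.pr_pr, sub_self]
    let g : (Fin (m + 1) → S) → N := fun b => G' b 1
    have hg : IsML K g := hG'.map (LinearMap.applyₗ (1 : S))
    have hgrel : Rel R g := hG'rel.map (LinearMap.applyₗ (1 : S))
    have hgi : ∀ b, A.iota (g b) = G' b := by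
      intro b
      ext a
      have := congrArg (fun φ : S →ₗ[K] N => φ a) (hprG' b)
      simp at this
      simpa [g] using (sub_eq_zero.mp this).symm
    refine ⟨fun b => A.l C.y (g b), hg.map _, hgrel.map _, fun b => ?_⟩
    rw [← dd_map A A (A.l C.y) (fun s n => A.l_comm _ _ _) (fun s n => A.comm _ _ _)]
    have h1 : A.iota (dd A g b) = A.iota (A.U C m (A.l C.y (f b))) := by
      rw [dd_map A A.plus A.iota A.iota_l A.iota_r]
      simp only [hgi]
      simp only [G']
      rw [dd_sub, dd_dd A.plus hh, sub_zero, ← dd_map A.plus A.plus (A.plus.U C m)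
        (fun s n => A.plus.U_l C m s n) (fun s n => A.plus.U_r C m s n), hdG,
        Act.U_map C A A.plus A.iota A.iota_l A.iota_r]
    exact congrArg (fun φ : S →ₗ[K] N => φ C.y) h1

end Killing

section Depth

open TensorProduct CategoryTheory.Abelian
open scoped Pointwise

variable {K S : Type} [CommRing K] [CommRing S] [Algebra K S]

/-- The symmetric bimodule attached to an `S`-module. -/
def symAct (K S N : Type) [CommRing K] [CommRing S] [Algebra K S] [AddCommGroup N] [Module K N]
    [Module S N] [IsScalarTower K S N] : Act K S N where
  l := (Algebra.lsmul K K N : S →ₐ[K] Module.End K N).toLinearMap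
  r := (Algebra.lsmul K K N : S →ₐ[K] Module.End K N).toLinearMap
  l_mul := by intro s t n; simp [mul_smul]
  r_mul := by intro s t n; simp [mul_smul]
  comm := by intro s t n; simp [smul_comm s t n]

@[simp] lemma symAct_l (N : Type) [AddCommGroup N] [Module K N]
    [Module S N] [IsScalarTower K S N] (s : S) (n : N) : (symAct K S N).l s n = s • n := rfl

@[simp] lemma symAct_r (N : Type) [AddCommGroup N] [Module K N]
    [Module S N] [IsScalarTower K S N] (s : S) (n : N) : (symAct K S N).r s n = s • n := rfl

lemma symAct_U {R : Subalgebra K S} (C : Coord R) (N : Type) [AddCommGroup N] [Module K N]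
    [Module S N] [IsScalarTower K S N] (m : ℕ) (n : N) :
    (symAct K S N).U C m n = C.y ^ (2 * m + 1) • n := by
  induction m generalizing n with
  | zero => simp [Act.U, ← C.y_eq, smul_smul, Finset.sum_smul]
  | succ m ih =>
    simp only [Act.U, LinearMap.comp_apply, symAct_l, ih, smul_smul]
    congr 1
    ring

lemma lift_ml [Module.Projective K S] {N N' : Type} [AddCommGroup N] [Module K N]
    [AddCommGroup N'] [Module K N'] (p : N →ₗ[K] N') (hp : Function.Surjective p) (n : ℕ)
    (F : MultilinearMap K (fun _ : Fin n => S) N') :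
    ∃ F' : MultilinearMap K (fun _ : Fin n => S) N, p.compMultilinearMap F' = F := by
  induction n with
  | zero =>
    obtain ⟨x, hx⟩ := hp (F ![])
    refine ⟨MultilinearMap.constOfIsEmpty K _ x, ?_⟩
    ext a
    rw [Subsingleton.elim a ![]]
    simpa using hx
  | succ n ih =>
    let P : MultilinearMap K (fun _ : Fin n => S) N →ₗ[K] MultilinearMap K (fun _ : Fin n => S) N' :=
      { toFun := fun F => p.compMultilinearMap F
        map_add' := by intro x y; ext; simp
        map_smul' := by intro x y; ext; simp }
    obtain ⟨h, hh⟩ := Module.projective_lifting_property P F.curryLeft ih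
    refine ⟨LinearMap.uncurryLeft (M := fun _ => S) h, ?_⟩
    ext a
    have := congrArg (fun φ => φ (a 0) (Fin.tail a)) hh
    simpa [P] using this

lemma lift_rel [Module.Projective K S] {R : Subalgebra K S} (π : S →ₗ[K] S) (hπ : ∀ s, π s ∈ R)
    (hπ' : ∀ s ∈ R, π s = s) {N N' : Type} [AddCommGroup N] [Module K N]
    [AddCommGroup N'] [Module K N'] (p : N →ₗ[K] N') (hp : Function.Surjective p) (n : ℕ)
    (f : (Fin n → S) → N') (hf : IsML K f) (hrel : Rel R f) :
    ∃ g : (Fin n → S) → N, IsML K g ∧ Rel R g ∧ ∀ a, p (g a) = f a := by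
  obtain ⟨F, hF⟩ := hf
  obtain ⟨F', rfl⟩ := lift_ml p hp n F
  have hF' : IsML K (F' : (Fin n → S) → N) := ⟨F', fun a => rfl⟩
  refine ⟨_, hF'.sub (hF'.precomp π), fun a ha => ?_, fun a => ?_⟩
  · simp only [Pi.sub_apply]
    rw [show (fun i => π (a i)) = a from funext fun i => hπ' _ (ha i), sub_self]
  · have h1 := hrel (fun i => π (a i)) (fun i => hπ _)
    rw [← hF] at h1 ⊢
    simp only [Pi.sub_apply, map_sub]
    simp only [LinearMap.compMultilinearMap_apply] at h1 ⊢
    rw [h1, sub_zero]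

lemma divide {R : Subalgebra K S} {N : Type} [AddCommGroup N] [Module K N]
    (w : N →ₗ[K] N) (hw : Function.Injective w) {n : ℕ}
    (f : (Fin n → S) → N) (hf : IsML K f) (hrel : Rel R f) (h : ∀ a, ∃ x, w x = f a) :
    ∃ g : (Fin n → S) → N, IsML K g ∧ Rel R g ∧ ∀ a, w (g a) = f a := by
  choose g hg using h
  refine ⟨g, ?_, fun a ha => hw (by rw [hg, hrel a ha, map_zero]), hg⟩
  rw [← isML_iff] at hf ⊢
  refine ⟨fun a i x y => hw ?_, fun a i k x => hw ?_⟩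
  · rw [map_add, hg, hg, hg, hf.1]
  · rw [map_smul, hg, hg, hf.2]

theorem exact_of_ext [IsNoetherianRing S] [Module.Projective K S] {R : Subalgebra K S}
    (π : S →ₗ[K] S) (hπ : ∀ s, π s ∈ R)
    (hπ' : ∀ s ∈ R, π s = s) (I : Ideal S) (hI : ∀ y ∈ I, ∃ C : Coord R, C.y = y)
    (n : ℕ) (N : Type) [AddCommGroup N] [Module K N] [Module S N] [IsScalarTower K S N]
    [Module.Finite S N]
    (hext : ∀ i < n, Subsingleton (Ext (ModuleCat.of S (S ⧸ I)) (ModuleCat.of S N) i))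
    (m : ℕ) (hm : m + 1 < n + 1) (f : (Fin m → S) → N) (hf : IsML K f) (hrel : Rel R f)
    (hcoc : dd (symAct K S N) f = 0) :
    (m = 0 ∧ f = 0) ∨ ∃ (m' : ℕ) (e : m = m' + 1) (g : (Fin m' → S) → N), IsML K g ∧ Rel R g ∧
      ∀ a, dd (symAct K S N) g a = f (fun i => a (Fin.cast e i)) := by
  induction n generalizing N m with
  | zero => omega
  | succ n ih =>
    obtain _ | m := m
    · left
      refine ⟨rfl, funext fun a => hrel a (fun i => i.elim0)⟩
    right
    refine ⟨m, rfl, ?_⟩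
    have : Subsingleton ((ModuleCat.of S (S ⧸ I)) ⟶ (ModuleCat.of S N)) :=
      Ext.addEquiv₀.subsingleton_congr.mp (hext 0 n.zero_lt_succ)
    have : Subsingleton ((S ⧸ I) →ₗ[S] N) :=
      (ModuleCat.homAddEquiv (M := ModuleCat.of S (S ⧸ I)) (N := ModuleCat.of S N)).symm.subsingleton
    obtain ⟨y, mem_ann, hy⟩ := IsSMulRegular.subsingleton_linearMap_iff.mp this
    rw [Ideal.annihilator_quotient] at mem_ann
    obtain ⟨C, rfl⟩ := hI y mem_ann
    set w := C.y ^ (2 * m + 1) with hw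
    have hreg : IsSMulRegular N w := hy.pow _
    have h_ext' : ∀ i < n, Subsingleton (Ext (ModuleCat.of S (S ⧸ I))
        (ModuleCat.of S (QuotSMulTop w N)) i) := by
      intro i hi
      have zero1 := AddCommGrpCat.isZero_of_iff_subsingleton.mpr (hext i (by omega))
      have zero2 := AddCommGrpCat.isZero_of_iff_subsingleton.mpr (hext (i + 1) (by omega))
      have hreg' : IsSMulRegular (ModuleCat.of S N) w := hreg
      exact AddCommGrpCat.subsingleton_of_isZero <| ShortComplex.Exact.isZero_of_both_zeros
        ((Ext.covariant_sequence_exact₃' _ hreg'.smulShortComplex_shortExact) i (i + 1) rfl)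
        (zero1.eq_zero_of_src _) (zero2.eq_zero_of_tgt _)
    obtain ⟨G, hG, hGrel, hdG⟩ := kill C π hπ hπ' m N (symAct K S N) f hf hrel hcoc
    simp only [symAct_U, ← hw] at hdG
    let p : N →ₗ[K] QuotSMulTop w N :=
      (Submodule.mkQ (w • (⊤ : Submodule S N))).restrictScalars K
    have hp : Function.Surjective p := Submodule.mkQ_surjective _
    have hpl : ∀ (s : S) (n : N), p (s • n) = s • p n := fun s n => map_smul (Submodule.mkQ _) s n
    have hpw : ∀ n, p (w • n) = 0 := by
      intro n
      exact (Submodule.Quotient.mk_eq_zero _).mpr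
        (Submodule.smul_mem_pointwise_smul _ _ _ Submodule.mem_top)
    have hp0 : ∀ n, p n = 0 → ∃ x, w • x = n := by
      intro n hn
      obtain ⟨x, -, hx⟩ := (Submodule.Quotient.mk_eq_zero _).mp hn
      exact ⟨x, hx⟩
    have hpG : dd (symAct K S (QuotSMulTop w N)) (fun a => p (G a)) = 0 := by
      funext a
      rw [← dd_map (symAct K S N) (symAct K S (QuotSMulTop w N)) p hpl hpl, hdG, hpw]; rfl
    have main : ∃ h : (Fin m → S) → N, IsML K h ∧ Rel R h ∧ dd (symAct K S N) h = 0 ∧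
        ∀ a, p (h a) = p (G a) := by
      rcases ih (QuotSMulTop w N) h_ext' m (by omega) _ (hG.map p) (hGrel.map p) hpG with
        ⟨rfl, h0⟩ | ⟨m', rfl, g, hg, hgrel, hdg⟩
      · refine ⟨0, ⟨0, fun a => rfl⟩, fun a _ => rfl, dd_zero _, fun a => ?_⟩
        simpa using (congrFun h0 a).symm
      · obtain ⟨g', hg', hg'rel, hpg'⟩ := lift_rel π hπ hπ' p hp m' g hg hgrel
        refine ⟨dd (symAct K S N) g', hg'.dd _, hg'rel.dd _, dd_dd _ hg', fun a => ?_⟩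
        rw [dd_map (symAct K S N) (symAct K S (QuotSMulTop w N)) p hpl hpl]
        simp only [hpg', hdg]
        rfl
    obtain ⟨h, hh, hhrel, hdh, hph⟩ := main
    obtain ⟨g, hg, hgrel, hwg⟩ := divide ((symAct K S N).l w) hreg (G - h) (hG.sub hh)
      (hGrel.sub hhrel) (fun a => hp0 _ (by simp [hph]))
    refine ⟨g, hg, hgrel, fun a => hreg ?_⟩
    have h1 := dd_map (symAct K S N) (symAct K S N) ((symAct K S N).l w)
      (fun s n => (symAct K S N).l_comm _ _ _) (fun s n => (symAct K S N).comm _ _ _) g a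
    simp only [hwg] at h1
    simp only [symAct_l] at h1
    show w • dd _ g a = w • f _
    rw [h1]
    change dd (symAct K S N) (G - h) a = _
    rw [dd_sub, hdh, sub_zero, hdG]
    rfl

end Depth

section GroupAction

open TensorProduct

variable (K : Type) [CommRing K] (S : Type) [CommRing S] [Algebra K S]
variable (G : Type) [Group G] [MulSemiringAction G S] [SMulCommClass G K S]

/-- The action of a group element as a linear map. -/
def gl (g : G) : S →ₗ[K] S where
  toFun s := g • s
  map_add' := smul_add g
  map_smul' k s := smul_comm g k s

@[simp] lemma gl_apply (g : G) (s : S) : gl K S G g s = g • s := rfl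

/-- The trace map. -/
def tr [Fintype G] : S →ₗ[K] S := ∑ g : G, gl K S G g

lemma tr_apply [Fintype G] (s : S) : tr K S G s = ∑ g : G, g • s := by
  simp [tr]

lemma mem_inv (s : S) : s ∈ invariants K S G ↔ ∀ g : G, g • s = s := Iff.rfl

lemma tr_mem [Fintype G] (s : S) : tr K S G s ∈ invariants K S G := by
  rw [mem_inv]
  intro g
  rw [tr_apply, Finset.smul_sum]
  simp only [smul_smul]
  exact Fintype.sum_equiv (Equiv.mulLeft g) _ _ (fun h => rfl)

lemma tr_mul [Fintype G] (s r : S) (hr : r ∈ invariants K S G) :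
    tr K S G (s * r) = tr K S G s * r := by
  rw [mem_inv] at hr
  simp only [tr_apply, smul_mul', hr, Finset.sum_mul]

/-- A group element as an algebra endomorphism over the invariants. -/
def gAlg (g : G) : S →ₐ[↥(invariants K S G)] S :=
  { MulSemiringAction.toRingHom G S g with
    commutes' := fun r => r.2 g }

/-- The twisted multiplication map. -/
def twist (g : G) : (S ⊗[↥(invariants K S G)] S) →+* S :=
  (Algebra.TensorProduct.lift (R := ↥(invariants K S G)) (S := ↥(invariants K S G))
    (AlgHom.id (↥(invariants K S G)) S) (gAlg K S G g)
    (fun _ _ => Commute.all _ _)).toRingHom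

lemma twist_tmul (g : G) (a b : S) : twist K S G g (a ⊗ₜ b) = a * g • b := by
  exact Algebra.TensorProduct.lift_tmul (R := ↥(invariants K S G)) (S := ↥(invariants K S G))
    (AlgHom.id (↥(invariants K S G)) S) (gAlg K S G g) (fun _ _ => Commute.all _ _) a b

theorem coord_of_mem [Finite G]
    (houter : ∀ g : G, g ≠ 1 → ∀ s' : S, s' ≠ 0 → ∃ s : S, s * s' - s' * (g • s) ≠ 0)
    (y : S) (hy : y ∈ noetherDifferent K S G) :
    ∃ C : Coord (invariants K S G), C.y = y := by
  have : Fintype G := Fintype.ofFinite G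
  classical
  obtain ⟨x, hx, hxy⟩ : ∃ x : S ⊗[↥(invariants K S G)] S,
      (∀ s : S, (s ⊗ₜ[↥(invariants K S G)] (1 : S)) * x = ((1 : S) ⊗ₜ s) * x) ∧
      Algebra.TensorProduct.lmul' (R := ↥(invariants K S G)) (S := S) x = y := by
    unfold noetherDifferent at hy
    induction hy using Submodule.span_induction with
    | mem y h =>
      obtain ⟨x, hx, rfl⟩ := h
      exact ⟨x, hx, rfl⟩
    | zero => exact ⟨0, by simp, by simp⟩
    | add y z _ _ h1 h2 =>
      obtain ⟨x, hx, rfl⟩ := h1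
      obtain ⟨x', hx', rfl⟩ := h2
      exact ⟨x + x', fun s => by rw [mul_add, mul_add, hx, hx'], by simp⟩
    | smul s y _ h1 =>
      obtain ⟨x, hx, rfl⟩ := h1
      refine ⟨(s ⊗ₜ 1) * x, fun s' => ?_, by simp⟩
      rw [mul_left_comm, hx, mul_left_comm]
  obtain ⟨k, a, b, rfl⟩ := TensorProduct.exists_sum_tmul_eq x
  have key : ∀ g : G, g ≠ 1 → ∑ i, a i * g • b i = 0 := by
    intro g hg
    by_contra hne
    obtain ⟨s, hs⟩ := houter g hg _ hne
    apply hs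
    have := congrArg (twist K S G g) (hx s)
    simp only [map_mul, map_sum, twist_tmul, smul_one, one_mul, mul_one] at this
    rw [this, mul_comm, sub_self]
  have hy' : ∑ i, a i * b i = y := by simpa using hxy
  refine ⟨⟨k, a, b, fun i => tr K S G ∘ₗ LinearMap.mulLeft K (b i), y, ?_, ?_, ?_, ?_, hy'⟩, rfl⟩
  · intro i s
    exact tr_mem K S G _
  · intro i s r hr
    simp only [LinearMap.comp_apply, LinearMap.mulLeft_apply]
    rw [← mul_assoc, tr_mul K S G _ _ hr]
  · intro s
    simp only [LinearMap.comp_apply, LinearMap.mulLeft_apply, tr_apply, smul_mul', Finset.mul_sum]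
    rw [Finset.sum_comm]
    rw [Finset.sum_eq_single (1 : G)]
    · rw [← hy', Finset.mul_sum]
      refine Finset.sum_congr rfl fun i _ => ?_
      simp only [one_smul]
      ring
    · intro g _ hg
      simp only [← mul_assoc]
      rw [← Finset.sum_mul, key g hg, zero_mul]
    · simp
  · intro s
    have := hx s
    simp only [Finset.mul_sum, Algebra.TensorProduct.tmul_mul_tmul, one_mul] at this
    exact this.symm

end GroupAction

section Cohomology

variable {K : Type} [CommRing K]

/-- The class of a cocycle. -/
def mkHH (K R : Type) [CommRing K] [Ring R] [Module K R] (n : ℕ) :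
    cocycles K R n →+ HH K R n := QuotientAddGroup.mk' (coboundariesIn K R n)

lemma mkHH_surj {R : Type} [Ring R] [Module K R] {n : ℕ} (x : HH K R n) :
    ∃ f, mkHH K R n f = x := QuotientAddGroup.mk'_surjective _ x

lemma mkHH_eq_zero {R : Type} [Ring R] [Module K R] {n : ℕ} (f : cocycles K R n) :
    mkHH K R n f = 0 ↔ IsCoboundary K (f : (Fin n → R) → R) :=
  QuotientAddGroup.eq_zero_iff f

/-- Descent of maps to cohomology. -/
def liftHH {R A : Type} [Ring R] [Module K R] [AddCommGroup A] {n : ℕ} (φ : cocycles K R n →+ A)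
    (h : ∀ f : cocycles K R n, IsCoboundary K (f : (Fin n → R) → R) → φ f = 0) : HH K R n →+ A :=
  QuotientAddGroup.lift (coboundariesIn K R n) φ h

lemma liftHH_mk {R A : Type} [Ring R] [Module K R] [AddCommGroup A] {n : ℕ}
    (φ : cocycles K R n →+ A)
    (h : ∀ f : cocycles K R n, IsCoboundary K (f : (Fin n → R) → R) → φ f = 0)
    (f : cocycles K R n) : liftHH φ h (mkHH K R n f) = φ f := rfl

lemma ml_comp {T S N N' : Type} [Ring T] [Module K T] [Ring S] [Module K S] [AddCommGroup N]
    [Module K N] [AddCommGroup N'] [Module K N'] (p : T →ₗ[K] S) (q : N →ₗ[K] N') {n : ℕ}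
    {f : (Fin n → S) → N} (hf : IsMultilinearCochain K f) :
    IsMultilinearCochain K (fun a : Fin n → T => q (f (fun i => p (a i)))) := by
  have h : ∀ (a : Fin n → T) (i : Fin n) (x : T), (fun j => p (Function.update a i x j)) =
      Function.update (fun j => p (a j)) i (p x) := by
    intro a i x
    funext j
    by_cases hj : j = i
    · subst hj; simp
    · simp [hj]
  refine ⟨fun a i x y => ?_, fun a i k x => ?_⟩
  · simp only [h, map_add, hf.1]
  · simp only [h, map_smul, hf.2]

/-- The coboundary is natural along semilinear pairs. -/
lemma hd_comp {T S : Type} [CommRing T] [CommRing S] (p : T → S) (q : S → T)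
    (hp : ∀ x y, p (x * y) = p x * p y) (hq : ∀ x y, q (x + y) = q x + q y)
    (hpq : ∀ t s, q (p t * s) = t * q s) {n : ℕ} (f : (Fin n → S) → S) (a : Fin (n + 1) → T) :
    hd (fun a : Fin n → T => q (f (fun i => p (a i)))) a = q (hd f (fun i => p (a i))) := by
  have hc : ∀ i, (fun j => p (mulConsec a i j)) = mulConsec (fun i => p (a i)) i := by
    intro i
    funext j
    simp only [mulConsec]
    split_ifs <;> simp [hp]
  let Q : S →+ T := AddMonoidHom.mk' q hq
  have hQ : ∀ x, q x = Q x := fun x => rfl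
  have hpq' : ∀ t s, Q (p t * s) = t * Q s := hpq
  simp only [hd, hc, hQ, map_add, map_sum, map_zsmul, smul_eq_mul, op_smul_eq_mul, hpq']
  rw [mul_comm (f _) (p _), hpq', mul_comm (Q _) (a (Fin.last n))]
  rfl

/-- The coboundary is compatible with restriction to a subring. -/
lemma hd_comp2 {T S : Type} [CommRing T] [CommRing S] (p : T →+* S) {n : ℕ}
    (F : (Fin n → S) → S) (f : (Fin n → T) → T) (h : ∀ a, F (fun i => p (a i)) = p (f a))
    (a : Fin (n + 1) → T) : hd F (fun i => p (a i)) = p (hd f a) := by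
  have hc : ∀ i, mulConsec (fun i => p (a i)) i = (fun j => p (mulConsec a i j)) := by
    intro i
    funext j
    simp only [mulConsec]
    split_ifs <;> simp
  have h1 : F (Fin.tail fun i => p (a i)) = p (f (Fin.tail a)) := h _
  have h2 : F (Fin.init fun i => p (a i)) = p (f (Fin.init a)) := h _
  simp only [hd, hc, h, h1, h2, map_add, map_sum, map_zsmul, smul_eq_mul, op_smul_eq_mul, map_mul]

variable {S : Type} [CommRing S] [Algebra K S]

lemma hd_eq_dd {n : ℕ} (f : (Fin n → S) → S) : hd f = dd (symAct K S S) f := by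
  funext a
  simp only [hd, dd, symAct_l, symAct_r, op_smul_eq_mul, smul_eq_mul]
  rw [mul_comm (f _) (a (Fin.last n))]

lemma hd_smul (c : K) {n : ℕ} (f : (Fin n → S) → S) : hd (c • f) = c • hd f := by
  funext a
  rw [hd_eq_dd (K := K), hd_eq_dd (K := K)]
  exact (dd_map (symAct K S S) (symAct K S S) (LinearMap.lsmul K S c)
    (fun s n => by simp) (fun s n => by simp) f a).symm

variable (K S) in
/-- Multilinear cochains as a submodule. -/
def mls (n : ℕ) : Submodule K ((Fin n → S) → S) where
  carrier := {f | IsMultilinearCochain K f}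
  add_mem' := fun hf hg => hf.add hg
  zero_mem' := IsMultilinearCochain.zero
  smul_mem' := fun c f hf => ml_comp LinearMap.id (LinearMap.lsmul K S c) hf

variable (K S) in
/-- The differential as a linear map. -/
def hdl (n : ℕ) : ((Fin n → S) → S) →ₗ[K] ((Fin (n + 1) → S) → S) where
  toFun := hd
  map_add' := hd_add
  map_smul' := fun c f => hd_smul c f

variable (K S) in
/-- Coboundaries as a submodule. -/
def cobs : ∀ n : ℕ, Submodule K ((Fin n → S) → S)
  | 0 => ⊥
  | n + 1 => (mls K S n).map (hdl K S n)

lemma mem_cobs {n : ℕ} (f : (Fin n → S) → S) : f ∈ cobs K S n ↔ IsCoboundary K f := by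
  cases n with
  | zero => exact Submodule.mem_bot K
  | succ n =>
    constructor
    · rintro ⟨h, hh, rfl⟩
      exact ⟨h, hh, rfl⟩
    · rintro ⟨h, hh, rfl⟩
      exact ⟨h, hh, rfl⟩

end Cohomology

section Compare

variable {K : Type} [CommRing K] {S : Type} [CommRing S] [Algebra K S]

/-- The data of a Reynolds operator onto a subalgebra. -/
structure Reynolds (R : Subalgebra K S) where
  p : S →ₗ[K] R
  p_coe : ∀ r : R, p r = r
  p_mul : ∀ (r : R) (s : S), p ((r : S) * s) = r * p s

variable {R : Subalgebra K S}

/-- Extension of cochains along the Reynolds operator. -/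
def Reynolds.ext (P : Reynolds R) {n : ℕ} (f : (Fin n → R) → R) : (Fin n → S) → S :=
  fun a => R.val.toLinearMap (f (fun i => P.p (a i)))

/-- Restriction of cochains. -/
def Reynolds.res (P : Reynolds R) {n : ℕ} (f : (Fin n → S) → S) : (Fin n → R) → R :=
  fun a => P.p (f (fun i => R.val.toLinearMap (a i)))

lemma Reynolds.ml_ext (P : Reynolds R) {n : ℕ} {f : (Fin n → R) → R}
    (hf : IsMultilinearCochain K f) : IsMultilinearCochain K (P.ext f) :=
  ml_comp P.p R.val.toLinearMap hf

lemma Reynolds.ml_res (P : Reynolds R) {n : ℕ} {f : (Fin n → S) → S}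
    (hf : IsMultilinearCochain K f) : IsMultilinearCochain K (P.res f) :=
  ml_comp R.val.toLinearMap P.p hf

lemma Reynolds.hd_res (P : Reynolds R) {n : ℕ} (f : (Fin n → S) → S) :
    hd (P.res f) = P.res (hd f) :=
  funext fun a => hd_comp (fun r : R => (r : S)) P.p (fun _ _ => rfl) (map_add P.p) P.p_mul f a

lemma Reynolds.ext_coe (P : Reynolds R) {n : ℕ} (f : (Fin n → R) → R) (a : Fin n → R) :
    P.ext f (fun i => (a i : S)) = f a := by
  simp [Reynolds.ext, P.p_coe]

lemma Reynolds.hd_ext_coe (P : Reynolds R) {n : ℕ} (f : (Fin n → R) → R) (a : Fin (n + 1) → R) :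
    hd (P.ext f) (fun i => (a i : S)) = hd f a :=
  hd_comp2 R.val.toRingHom (P.ext f) f (P.ext_coe f) a

variable {G : Type} [Group G] [MulSemiringAction G S] [SMulCommClass G K S]

lemma ml_mapG (g : G) {n : ℕ} {f : (Fin n → S) → S} (hf : IsMultilinearCochain K f) :
    IsMultilinearCochain K (mapG S G g f) :=
  ml_comp (gl K S G g⁻¹) (gl K S G g) hf

lemma hd_mapG (g : G) {n : ℕ} (f : (Fin n → S) → S) :
    hd (mapG S G g f) = mapG S G g (hd f) :=
  funext fun a => hd_comp (fun s : S => g⁻¹ • s) (fun s : S => g • s) (fun x y => smul_mul' _ _ _)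
    (smul_add g) (fun t s => by simp [smul_mul']) f a

lemma mapG_add (g : G) {n : ℕ} (f f' : (Fin n → S) → S) :
    mapG S G g (f + f') = mapG S G g f + mapG S G g f' := by
  funext a; simp [mapG]

lemma mapG_zero (g : G) {n : ℕ} : mapG S G g (0 : (Fin n → S) → S) = 0 := by
  funext a; simp [mapG]

lemma mapG_mul (g h : G) {n : ℕ} (f : (Fin n → S) → S) :
    mapG S G g (mapG S G h f) = mapG S G (g * h) f := by
  funext a; simp [mapG, mul_smul]

lemma cob_mapG (g : G) {n : ℕ} {f : (Fin n → S) → S} (hf : IsCoboundary K f) :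
    IsCoboundary K (mapG S G g f) := by
  cases n with
  | zero =>
    have hf' : f = 0 := hf
    rw [hf', mapG_zero]; rfl
  | succ n =>
    obtain ⟨h, hh, rfl⟩ := hf
    exact ⟨_, ml_mapG g hh, (hd_mapG g h).symm⟩

lemma Reynolds.cob_res (P : Reynolds R) {n : ℕ} {f : (Fin n → S) → S} (hf : IsCoboundary K f) :
    IsCoboundary K (P.res f) := by
  cases n with
  | zero =>
    have hf' : f = 0 := hf
    rw [hf']
    show P.res 0 = 0
    funext a
    simp [Reynolds.res]
  | succ n =>
    obtain ⟨h, hh, rfl⟩ := hf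
    exact ⟨_, P.ml_res hh, (P.hd_res h).symm⟩

/-- Action of `G` on cocycles. -/
def mapGc (K S : Type) [CommRing K] [CommRing S] [Algebra K S] {G : Type} [Group G]
    [MulSemiringAction G S] [SMulCommClass G K S] (n : ℕ) (g : G) :
    cocycles K S n →+ cocycles K S n where
  toFun f := ⟨mapG S G g f, ml_mapG g f.2.1, by rw [hd_mapG, f.2.2, mapG_zero]⟩
  map_zero' := Subtype.ext (mapG_zero g)
  map_add' f f' := Subtype.ext (mapG_add g (f : (Fin n → S) → S) (f' : (Fin n → S) → S))

/-- Action of `G` on cohomology. -/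
def rhoG (K S : Type) [CommRing K] [CommRing S] [Algebra K S] {G : Type} [Group G]
    [MulSemiringAction G S] [SMulCommClass G K S] (n : ℕ) (g : G) : HH K S n →+ HH K S n :=
  liftHH ((mkHH K S n).comp (mapGc K S n g)) (fun f hf => by
    rw [AddMonoidHom.comp_apply, mkHH_eq_zero]
    exact cob_mapG g hf)

/-- Restriction on cocycles. -/
def Reynolds.resc (P : Reynolds R) (n : ℕ) : cocycles K S n →+ cocycles K R n where
  toFun f := ⟨P.res f, P.ml_res f.2.1, by
    rw [P.hd_res, f.2.2]; funext a; simp [Reynolds.res]⟩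
  map_zero' := Subtype.ext (by funext a; simp [Reynolds.res])
  map_add' f f' := Subtype.ext (by funext a; simp [Reynolds.res])

/-- Restriction on cohomology. -/
def Reynolds.resH (P : Reynolds R) (n : ℕ) : HH K S n →+ HH K R n :=
  liftHH ((mkHH K R n).comp (P.resc n)) (fun f hf => by
    rw [AddMonoidHom.comp_apply, mkHH_eq_zero]
    exact P.cob_res hf)

/-- Averaging of cochains. -/
def avg [Fintype G] (c : K) {n : ℕ} (f : (Fin n → S) → S) : (Fin n → S) → S :=
  c • ∑ g : G, mapG S G g f

lemma avg_coe [Fintype G] (c : K) {n : ℕ} (f : (Fin n → S) → S) (a : Fin n → S)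
    (ha : ∀ i, a i ∈ invariants K S G) : avg (G := G) c f a = c • tr K S G (f a) := by
  have h : ∀ g : G, (fun i => g⁻¹ • a i) = a := fun g => funext fun i => ha i _
  simp [avg, tr_apply, mapG, h]

lemma avg_ml [Fintype G] (c : K) {n : ℕ} {f : (Fin n → S) → S} (hf : IsMultilinearCochain K f) :
    IsMultilinearCochain K (avg (G := G) c f) :=
  (mls K S n).smul_mem c (Submodule.sum_mem _ fun g _ => ml_mapG g hf)

lemma avg_hd [Fintype G] (c : K) {n : ℕ} {f : (Fin n → S) → S} (hf : hd f = 0) :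
    hd (avg (G := G) c f) = 0 := by
  show hdl K S n (avg (G := G) c f) = 0
  rw [avg, map_smul, map_sum, Finset.sum_eq_zero, smul_zero]
  intro g _
  show hd _ = 0
  rw [hd_mapG, hf, mapG_zero]

lemma avg_fixed [Fintype G] (c : K) {n : ℕ} (f : (Fin n → S) → S) (g : G) :
    mapG S G g (avg (G := G) c f) = avg (G := G) c f := by
  have h1 : mapG S G g (avg (G := G) c f) = c • ∑ h : G, mapG S G g (mapG S G h f) := by
    funext a
    simp only [mapG, avg, Pi.smul_apply, Finset.sum_apply, Finset.smul_sum, smul_comm g c]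
  rw [h1, avg]
  congr 1
  simp only [mapG_mul]
  exact Fintype.sum_equiv (Equiv.mulLeft g) _ _ (fun h => rfl)

lemma avg_sub [Fintype G] (c : K) (hc : c * (Fintype.card G : K) = 1) {n : ℕ}
    (f : (Fin n → S) → S) :
    avg (G := G) c f - f = c • ∑ g : G, (mapG S G g f - f) := by
  rw [Finset.sum_sub_distrib, smul_sub, ← avg]
  congr 1
  rw [Finset.sum_const, Finset.card_univ, ← Nat.cast_smul_eq_nsmul K, smul_smul, hc, one_smul]

/-- Exactness of the relative cochains in degree `m`. -/
def RelExact (R : Subalgebra K S) (m : ℕ) : Prop :=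
  ∀ f : (Fin m → S) → S, IsML K f → Rel R f → dd (symAct K S S) f = 0 →
    (m = 0 ∧ f = 0) ∨ ∃ (m' : ℕ) (e : m = m' + 1) (g : (Fin m' → S) → S), IsML K g ∧ Rel R g ∧
      ∀ a, dd (symAct K S S) g a = f (fun i => a (Fin.cast e i))

lemma RelExact.succ {m : ℕ} (h : RelExact R (m + 1)) (f : (Fin (m + 1) → S) → S)
    (hf : IsMultilinearCochain K f) (hrel : Rel R f) (hd0 : hd f = 0) :
    ∃ g : (Fin m → S) → S, IsMultilinearCochain K g ∧ Rel R g ∧ hd g = f := by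
  rw [hd_eq_dd (K := K)] at hd0
  rcases h f ((isML_iff f).mp hf) hrel hd0 with ⟨h0, -⟩ | ⟨m', e, g, hg, hgr, hdg⟩
  · omega
  · obtain rfl : m = m' := by omega
    refine ⟨g, (isML_iff g).mpr hg, hgr, ?_⟩
    rw [hd_eq_dd (K := K)]
    funext a
    rw [hdg]
    rfl

lemma hd_hd {n : ℕ} {f : (Fin n → S) → S} (hf : IsMultilinearCochain K f) : hd (hd f) = 0 := by
  rw [hd_eq_dd (K := K) f, hd_eq_dd (K := K)]
  exact dd_dd _ ((isML_iff f).mp hf)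

lemma inj_fun [Fintype G] (c : K) (hc : c * (Fintype.card G : K) = 1)
    (P : Reynolds (invariants K S G)) (hP : ∀ s, (P.p s : S) = c • tr K S G s)
    {n : ℕ} (hex : RelExact (invariants K S G) n) (f : (Fin n → S) → S)
    (hf : IsMultilinearCochain K f) (hf0 : hd f = 0)
    (hfix : ∀ g : G, IsCoboundary K (mapG S G g f - f)) (hres : IsCoboundary K (P.res f)) :
    IsCoboundary K f := by
  have h1 : avg (G := G) c f - f ∈ cobs K S n := by
    rw [avg_sub c hc]
    exact Submodule.smul_mem _ _ (Submodule.sum_mem _ fun g _ => (mem_cobs _).mpr (hfix g))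
  suffices h2 : avg (G := G) c f ∈ cobs K S n by
    rw [← mem_cobs]
    have := Submodule.sub_mem _ h2 h1
    simpa using this
  have hav : ∀ (a : Fin n → S) (ha : ∀ i, a i ∈ invariants K S G),
      avg (G := G) c f a = P.res f (fun i => ⟨a i, ha i⟩) := by
    intro a ha
    rw [avg_coe c f a ha, ← hP]
    rfl
  rw [mem_cobs]
  cases n with
  | zero =>
    have hres' : P.res f = 0 := hres
    show avg (G := G) c f = 0
    funext a
    rw [hav a (fun i => i.elim0), hres']
    rfl
  | succ n =>
    obtain ⟨k, hk, hke⟩ := hres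
    have hek := P.ml_ext hk
    obtain ⟨g, hg, -, hgd⟩ := hex.succ (avg (G := G) c f - hd (P.ext k))
      ((isML_iff _).mpr (((isML_iff _).mp (avg_ml c hf)).sub (by
        rw [hd_eq_dd (K := K)]; exact ((isML_iff _).mp hek).dd _)))
      (fun a ha => by
        have := P.hd_ext_coe k (fun i => ⟨a i, ha i⟩)
        rw [Pi.sub_apply, hav a ha, hke, sub_eq_zero]
        exact this.symm)
      (by
        show hdl K S _ _ = 0
        rw [map_sub]
        show hd _ - hd _ = 0
        rw [avg_hd c hf0, hd_hd hek, sub_zero])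
    exact ⟨g + P.ext k, hg.add hek, by rw [hd_add, hgd, sub_add_cancel]⟩

lemma surj_fun [Fintype G] (c : K)
    (P : Reynolds (invariants K S G)) (hP : ∀ s, (P.p s : S) = c • tr K S G s)
    {n : ℕ} (hex : RelExact (invariants K S G) (n + 1))
    (k : (Fin n → invariants K S G) → invariants K S G)
    (hk : IsMultilinearCochain K k) (hk0 : hd k = 0) :
    ∃ f : (Fin n → S) → S, IsMultilinearCochain K f ∧ hd f = 0 ∧
      (∀ g : G, mapG S G g f = f) ∧ P.res f = k := by
  have hek := P.ml_ext hk
  obtain ⟨h, hh, hrel, hhd⟩ := hex.succ (hd (P.ext k))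
    ((isML_iff _).mpr (by rw [hd_eq_dd (K := K)]; exact ((isML_iff _).mp hek).dd _))
    (fun a ha => by
      have := P.hd_ext_coe k (fun i => ⟨a i, ha i⟩)
      rw [hk0] at this
      exact this)
    (hd_hd hek)
  have hm : IsMultilinearCochain K (P.ext k - h) :=
    (isML_iff _).mpr (((isML_iff _).mp hek).sub ((isML_iff _).mp hh))
  have h0 : hd (P.ext k - h) = 0 := by
    show hdl K S _ _ = 0
    rw [map_sub]
    show hd _ - hd _ = 0
    rw [hhd, sub_self]
  refine ⟨avg (G := G) c (P.ext k - h), avg_ml c hm, avg_hd c h0, avg_fixed c _, ?_⟩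
  funext a
  have h2 : avg (G := G) c (P.ext k - h) (fun i => (a i : S)) = k a := by
    rw [avg_coe c _ _ (fun i => (a i).2), ← hP, Pi.sub_apply, hrel _ (fun i => (a i).2), sub_zero,
      P.ext_coe, P.p_coe]
  show P.p (avg (G := G) c (P.ext k - h) (fun i => (a i : S))) = k a
  rw [h2, P.p_coe]

theorem compare [Fintype G] (c : K) (hc : c * (Fintype.card G : K) = 1)
    (P : Reynolds (invariants K S G)) (hP : ∀ s, (P.p s : S) = c • tr K S G s)
    {n : ℕ} (hex : RelExact (invariants K S G) n) (hex' : RelExact (invariants K S G) (n + 1)) :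
    Nonempty (HH K (↥(invariants K S G)) n ≃+ fixedSubgroup (rhoG K S (G := G) n)) := by
  let Φ : fixedSubgroup (rhoG K S (G := G) n) →+ HH K (↥(invariants K S G)) n :=
    (P.resH n).comp (AddSubgroup.subtype _)
  have hΦ : Function.Bijective Φ := by
    constructor
    · rw [injective_iff_map_eq_zero]
      rintro ⟨x, hx⟩ h0
      obtain ⟨f, rfl⟩ := mkHH_surj x
      have h0' : mkHH K _ n (P.resc n f) = 0 := h0
      rw [mkHH_eq_zero] at h0'
      apply Subtype.ext
      show mkHH K S n f = 0
      rw [mkHH_eq_zero]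
      refine inj_fun c hc P hP hex f f.2.1 f.2.2 (fun g => ?_) h0'
      have hg : mkHH K S n (mapGc K S n g f) = mkHH K S n f := hx g
      rw [← sub_eq_zero, ← map_sub, mkHH_eq_zero] at hg
      exact hg
    · intro x
      obtain ⟨k, rfl⟩ := mkHH_surj x
      obtain ⟨f, hf, hf0, hfix, hres⟩ := surj_fun c P hP hex' k k.2.1 k.2.2
      refine ⟨⟨mkHH K S n ⟨f, hf, hf0⟩, fun g => ?_⟩, ?_⟩
      · show mkHH K S n (mapGc K S n g ⟨f, hf, hf0⟩) = mkHH K S n ⟨f, hf, hf0⟩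
        congr 1
        exact Subtype.ext (hfix g)
      · show mkHH K _ n (P.resc n ⟨f, hf, hf0⟩) = mkHH K _ n k
        congr 1
        exact Subtype.ext hres
  exact ⟨(AddEquiv.ofBijective Φ hΦ).symm⟩

end Compare

/-- Let `S` be a noetherian commutative `K`-algebra, projective as a
`K`-module, with `S ⊗_K S` noetherian, and let the finite group `G` act on `S`
infinitesimally through outer `K`-linear automorphisms, with `|G|` invertible in `K`.
Assume the invariant ring `R = S^G` is noetherian and `S` is a finitely generated
`R`-module. Let `c = depth(θ(S/R), S)`. Then there are natural isomorphisms
`Hoch^i(R) ≅ (Hoch^i(S))^G` for all `i ≤ c − 2`, where `G` acts on `Hoch^i(S)` via its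
action on `S`. -/
theorem hochschild_cohomology_of_invariant_ring
    (K : Type) [CommRing K] (S : Type) [CommRing S] [Algebra K S]
    [IsNoetherianRing S] (hKproj : Module.Projective K S)
    [IsNoetherianRing (TensorProduct K S S)]
    (G : Type) [Group G] [Finite G] [MulSemiringAction G S] [SMulCommClass G K S]
    (houter : ∀ g : G, g ≠ 1 → ∀ s' : S, s' ≠ 0 → ∃ s : S, s * s' - s' * (g • s) ≠ 0)
    (hGinv : IsUnit ((Nat.card G : K)))
    (hRnoeth : IsNoetherianRing (↥(invariants K S G)))
    (hSfin : Module.Finite (↥(invariants K S G)) S) :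
    ∃ ρ : ∀ n : ℕ, G → (HH K S n →+ HH K S n),
      -- `ρ` is the action of `G` on `Hoch(S)` induced by its action on cochains
      (∀ (n : ℕ) (g : G) (f f' : cocycles K S n),
          (f' : (Fin n → S) → S) = mapG S G g (f : (Fin n → S) → S) →
          ρ n g (QuotientAddGroup.mk f) = QuotientAddGroup.mk f')
      -- `Hoch^i(R) ≅ (Hoch^i(S))^G` for `i ≤ c − 2`
      ∧ (∀ i : ℕ, (i : ℕ∞) + 2 ≤ noetherDepth K S G →
          Nonempty (HH K (↥(invariants K S G)) i ≃+ fixedSubgroup (ρ i))) := by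
  have : Fintype G := Fintype.ofFinite G
  refine ⟨fun n g => rhoG K S n g, ?_, ?_⟩
  · intro n g f f' h
    have h1 : mapGc K S n g f = f' := Subtype.ext h.symm
    show mkHH K S n (mapGc K S n g f) = mkHH K S n f'
    rw [h1]
  · intro i hi
    obtain ⟨u, hu⟩ := hGinv
    set c : K := ↑u⁻¹ with hc_def
    have hc : c * (Fintype.card G : K) = 1 := by
      rw [← Nat.card_eq_fintype_card, ← hu, hc_def, Units.inv_mul]
    let π : S →ₗ[K] S := c • tr K S G
    have hπ : ∀ s, π s ∈ invariants K S G := fun s =>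
      (invariants K S G).smul_mem (tr_mem K S G s) c
    have hπ' : ∀ s ∈ invariants K S G, π s = s := by
      intro s hs
      rw [mem_inv] at hs
      show c • tr K S G s = s
      rw [tr_apply]
      simp only [hs]
      rw [Finset.sum_const, Finset.card_univ, ← Nat.cast_smul_eq_nsmul K, smul_smul, hc, one_smul]
    let P : Reynolds (invariants K S G) :=
      { p := π.codRestrict (Subalgebra.toSubmodule (invariants K S G)) hπ
        p_coe := fun r => Subtype.ext (hπ' r r.2)
        p_mul := fun r s => Subtype.ext (by
          show c • tr K S G ((r : S) * s) = (r : S) * (c • tr K S G s)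
          rw [mul_comm, tr_mul K S G _ _ r.2, mul_smul_comm, mul_comm]) }
    have hext : ∀ j < i + 2, Subsingleton (Abelian.Ext
        (ModuleCat.of S (S ⧸ noetherDifferent K S G)) (ModuleCat.of S S) j) := by
      intro j hj
      by_contra hne
      have h1 : noetherDepth K S G ≤ (j : ℕ∞) := sInf_le ⟨j, rfl, hne⟩
      have h2 : ((i + 2 : ℕ) : ℕ∞) ≤ (j : ℕ∞) := by
        push_cast
        exact hi.trans h1
      have h3 : i + 2 ≤ j := by exact_mod_cast h2
      omega
    have hex : ∀ m, m < i + 2 → RelExact (invariants K S G) m := by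
      intro m hm f hf hrel hcoc
      exact exact_of_ext π hπ hπ' (noetherDifferent K S G) (coord_of_mem K S G houter) (i + 2) S
        hext m (by omega) f hf hrel hcoc
    exact compare c hc P (fun s => rfl) (hex i (by omega)) (hex (i + 1) (by omega))

end MoritaHochschild
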